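/- arXiv:1306.3340 — 2 statements merged into one kernel-verified Lean document; each statement's English description precedes it below -/
import Mathlib

section
/- Let (G, u) be a strongly semisimple unital ℓ-group, let h₁, …, hₙ ∈ G, and for each i let Zᵢ be the set of maximal ℓ-ideals of G containing hᵢ. Suppose g₁, …, gₙ ∈ G satisfy gᵢ - gⱼ ∈ m for all i, j ∈ {1, …, n} and all m ∈ Zᵢ ∩ Zⱼ. Then there exists g ∈ G such that g - gᵢ ∈ m for each i ∈ {1, …, n} and each m ∈ Zᵢ. (Main Theorem, existence part; by Hölder's theorem, for a maximal ℓ-ideal m the Yosida functions satisfy ĝ(m) = ĝᵢ(m) if and only if g - gᵢ ∈ m, so this is the algebraic form of the functional statement.) -/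
/-- An ℓ-ideal of an ℓ-group `G`: an additive subgroup `I` such that `g ∈ I`
whenever `|g| ≤ |h|` for some `h ∈ I`. -/
def IsLIdeal {G : Type*} [Lattice G] [AddCommGroup G]
    [CovariantClass G G (· + ·) (· ≤ ·)] (I : AddSubgroup G) : Prop :=
  ∀ ⦃g h : G⦄, h ∈ I → |g| ≤ |h| → g ∈ I

/-- The ℓ-ideal generated by a subset `S` of `G`: the smallest ℓ-ideal containing `S`. -/
def lIdealGen {G : Type*} [Lattice G] [AddCommGroup G]
    [CovariantClass G G (· + ·) (· ≤ ·)] (S : Set G) : AddSubgroup G :=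
  sInf {I : AddSubgroup G | IsLIdeal I ∧ S ⊆ ↑I}

/-- A prime ℓ-ideal: a proper ℓ-ideal `p` such that `a ⊓ b = 0` implies `a ∈ p` or `b ∈ p`. -/
def IsPrimeLIdeal {G : Type*} [Lattice G] [AddCommGroup G]
    [CovariantClass G G (· + ·) (· ≤ ·)] (p : AddSubgroup G) : Prop :=
  IsLIdeal p ∧ p ≠ ⊤ ∧ ∀ a b : G, a ⊓ b = 0 → a ∈ p ∨ b ∈ p

/-- A maximal ℓ-ideal: a proper ℓ-ideal maximal under inclusion among proper ℓ-ideals. -/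
def IsMaximalLIdeal {G : Type*} [Lattice G] [AddCommGroup G]
    [CovariantClass G G (· + ·) (· ≤ ·)] (m : AddSubgroup G) : Prop :=
  IsLIdeal m ∧ m ≠ ⊤ ∧ ∀ I : AddSubgroup G, IsLIdeal I → I ≠ ⊤ → m ≤ I → I = m

/-- A (strong order) unit of `G`. -/
def IsStrongUnit {G : Type*} [Lattice G] [AddCommGroup G]
    [CovariantClass G G (· + ·) (· ≤ ·)] (u : G) : Prop :=
  0 ≤ u ∧ ∀ g : G, ∃ n : ℕ, g ≤ n • u

/-- `G` is strongly semisimple: for every `h ∈ G`, the intersection of all maximal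
ℓ-ideals containing `h` equals the principal ℓ-ideal generated by `h`. -/
def IsStronglySemisimple (G : Type*) [Lattice G] [AddCommGroup G]
    [CovariantClass G G (· + ·) (· ≤ ·)] : Prop :=
  ∀ h : G, sInf {m : AddSubgroup G | IsMaximalLIdeal m ∧ h ∈ m} = lIdealGen {h}

/-!
An abelian ℓ-group satisfies the Chinese remainder theorem for finitely many ℓ-ideals: if
`g i - g j ≤ c i + c j` for all `i`, `j`, then, as in McShane's extension of Lipschitz functions,
the finite join `⨆ i, (g i - c i)` lies within `c i` of every `g i`. Strong semisimplicity turns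
congruence modulo all maximal ℓ-ideals containing `h i` and `h j` into congruence modulo
`⟨|h i| + |h j|⟩ = ⟨h i⟩ ⊔ ⟨h j⟩`, to which the Chinese remainder theorem applies.
-/

section

variable {G : Type*} [Lattice G] [AddCommGroup G] [AddLeftMono G]

theorem exists_abs_le_and_abs_sub_le {x a b : G} (ha : 0 ≤ a) (hb : 0 ≤ b) (hx : |x| ≤ a + b) :
    ∃ y, |y| ≤ a ∧ |x - y| ≤ b := by
  obtain ⟨hx_le, hx_ge⟩ := abs_le'.1 hx
  have neg_a_le : -a ≤ x + b := neg_le.1 (by rwa [neg_add', sub_le_iff_le_add])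
  -- Truncate `x` to the interval `[-a, a]`.
  refine ⟨x ⊓ a ⊔ -a, abs_le'.2 ⟨?_, ?_⟩, abs_le'.2 ⟨?_, ?_⟩⟩
  · exact sup_le inf_le_right ((neg_nonpos.2 ha).trans ha)
  · exact neg_le.1 le_sup_right
  · have : x - b ≤ x ⊓ a := le_inf (sub_le_self x hb) (sub_le_iff_le_add.2 hx_le)
    exact sub_le_comm.1 (this.trans le_sup_left)
  · rw [neg_sub, sub_le_iff_le_add']
    exact sup_le (inf_le_left.trans (le_add_of_nonneg_right hb)) neg_a_le

theorem exists_forall_abs_sub_le {ι : Type*} [Finite ι] {g c : ι → G}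
    (hgc : ∀ i j, g i - g j ≤ c i + c j) : ∃ x, ∀ i, |x - g i| ≤ c i := by
  cases nonempty_fintype ι
  cases isEmpty_or_nonempty ι
  · exact ⟨0, isEmptyElim⟩
  refine ⟨Finset.univ.sup' Finset.univ_nonempty fun i ↦ g i - c i, fun i ↦ abs_le'.2 ⟨?_, ?_⟩⟩
  · refine sub_le_iff_le_add.2 <| Finset.sup'_le _ _ fun j _ ↦ ?_
    calc g j - c j = g j - g i - c j + g i := by abel
      _ ≤ c j + c i - c j + g i := by gcongr; exact hgc j i
      _ = c i + g i := by abel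
  · rw [neg_sub, sub_le_comm]
    exact Finset.le_sup' (fun i ↦ g i - c i) (Finset.mem_univ i)

namespace IsLIdeal

variable {I J : AddSubgroup G}

theorem abs_mem_iff (hI : IsLIdeal I) {x : G} : |x| ∈ I ↔ x ∈ I :=
  ⟨fun h ↦ hI h (abs_abs x).ge, fun h ↦ hI h (abs_abs x).le⟩

theorem abs_add_abs_mem_iff (hI : IsLIdeal I) {x y : G} : |x| + |y| ∈ I ↔ x ∈ I ∧ y ∈ I := by
  refine ⟨fun h ↦ ⟨hI h ?_, hI h ?_⟩,
    fun h ↦ I.add_mem (hI.abs_mem_iff.2 h.1) (hI.abs_mem_iff.2 h.2)⟩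
  · exact (le_add_of_nonneg_right (abs_nonneg y)).trans (le_abs_self _)
  · exact (le_add_of_nonneg_left (abs_nonneg x)).trans (le_abs_self _)

theorem sup (hI : IsLIdeal I) (hJ : IsLIdeal J) : IsLIdeal (I ⊔ J) := by
  intro x y hy hxy
  obtain ⟨a, ha, b, hb, rfl⟩ := AddSubgroup.mem_sup.1 hy
  obtain ⟨z, hza, hzb⟩ := exists_abs_le_and_abs_sub_le (abs_nonneg a) (abs_nonneg b)
    (hxy.trans (abs_add_le a b))
  exact AddSubgroup.mem_sup.2 ⟨z, hI ha hza, x - z, hJ hb hzb, add_sub_cancel z x⟩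

theorem exists_mem_forall_abs_le (hI : IsLIdeal I) {ι : Type*} [Finite ι] {f : ι → G}
    (hf : ∀ i, f i ∈ I) : ∃ c ∈ I, ∀ i, |f i| ≤ c := by
  cases nonempty_fintype ι
  refine ⟨∑ i, |f i|, I.sum_mem fun i _ ↦ hI.abs_mem_iff.2 (hf i), fun i ↦ ?_⟩
  exact Finset.single_le_sum (f := fun i ↦ |f i|) (fun i _ ↦ abs_nonneg (f i)) (Finset.mem_univ i)

theorem exists_forall_sub_mem {ι : Type*} [Finite ι] {I : ι → AddSubgroup G}
    (hI : ∀ i, IsLIdeal (I i)) {g : ι → G} (hg : ∀ i j, g i - g j ∈ I i ⊔ I j) :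
    ∃ x, ∀ i, x - g i ∈ I i := by
  choose a ha b hb hab using fun i j ↦ AddSubgroup.mem_sup.1 (hg i j)
  choose c hc hac using fun i ↦ (hI i).exists_mem_forall_abs_le (ha i)
  choose d hd hbd using fun j ↦ (hI j).exists_mem_forall_abs_le (hb · j)
  have hc_nonneg i : 0 ≤ c i := (abs_nonneg _).trans (hac i i)
  have hd_nonneg i : 0 ≤ d i := (abs_nonneg _).trans (hbd i i)
  obtain ⟨x, hx⟩ : ∃ x, ∀ i, |x - g i| ≤ c i + d i := exists_forall_abs_sub_le fun i j ↦
    calc g i - g j = a i j + b i j := (hab i j).symm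
      _ ≤ c i + d j :=
        add_le_add ((le_abs_self _).trans (hac i j)) ((le_abs_self _).trans (hbd j i))
      _ ≤ (c i + d i) + (c j + d j) :=
        add_le_add (le_add_of_nonneg_right (hd_nonneg i)) (le_add_of_nonneg_left (hc_nonneg j))
  exact ⟨x, fun i ↦ hI i (add_mem (hc i) (hd i)) ((hx i).trans (le_abs_self _))⟩

end IsLIdeal

theorem isLIdeal_lIdealGen (S : Set G) : IsLIdeal (lIdealGen S) := by
  intro x y hy hxy
  exact AddSubgroup.mem_sInf.2 fun I hI ↦ hI.1 (AddSubgroup.mem_sInf.1 hy I hI) hxy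

theorem subset_lIdealGen (S : Set G) : S ⊆ lIdealGen S :=
  fun _ hx ↦ AddSubgroup.mem_sInf.2 fun _ hI ↦ hI.2 hx

theorem lIdealGen_le {S : Set G} {I : AddSubgroup G} (hI : IsLIdeal I) (hS : S ⊆ I) :
    lIdealGen S ≤ I :=
  sInf_le ⟨hI, hS⟩

theorem lIdealGen_abs_add_abs_le_sup (x y : G) :
    lIdealGen {|x| + |y|} ≤ lIdealGen {x} ⊔ lIdealGen {y} := by
  have hsup := (isLIdeal_lIdealGen {x}).sup (isLIdeal_lIdealGen {y})
  refine lIdealGen_le hsup (Set.singleton_subset_iff.2 (hsup.abs_add_abs_mem_iff.2 ⟨?_, ?_⟩))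
  · exact AddSubgroup.mem_sup_left (subset_lIdealGen _ rfl)
  · exact AddSubgroup.mem_sup_right (subset_lIdealGen _ rfl)

theorem IsStronglySemisimple.mem_lIdealGen_singleton_iff (hss : IsStronglySemisimple G) {x h : G} :
    x ∈ lIdealGen {h} ↔ ∀ m : AddSubgroup G, IsMaximalLIdeal m → h ∈ m → x ∈ m := by
  simp only [← hss h, AddSubgroup.mem_sInf, Set.mem_ofPred_eq, and_imp]

end

theorem main_theorem_existence_general {G : Type*} [Lattice G] [AddCommGroup G] [AddLeftMono G]
    (hss : IsStronglySemisimple G) {ι : Type*} [Finite ι] (h g : ι → G)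
    (hcomp : ∀ i j, ∀ m : AddSubgroup G, IsMaximalLIdeal m →
      h i ∈ m → h j ∈ m → g i - g j ∈ m) :
    ∃ g' : G, ∀ i, ∀ m : AddSubgroup G, IsMaximalLIdeal m → h i ∈ m → g' - g i ∈ m := by
  have hcongr i j : g i - g j ∈ lIdealGen {h i} ⊔ lIdealGen {h j} := by
    refine lIdealGen_abs_add_abs_le_sup (h i) (h j)
      (hss.mem_lIdealGen_singleton_iff.2 fun m hm hmem ↦ ?_)
    obtain ⟨hi, hj⟩ := hm.1.abs_add_abs_mem_iff.1 hmem
    exact hcomp i j m hm hi hj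
  obtain ⟨g', hg'⟩ := IsLIdeal.exists_forall_sub_mem (fun i ↦ isLIdeal_lIdealGen {h i}) hcongr
  exact ⟨g', fun i ↦ hss.mem_lIdealGen_singleton_iff.1 (hg' i)⟩

/-- **Main Theorem (existence part).** For a strongly semisimple unital ℓ-group,
given elements `h i` determining the principal zero sets `Z i` (maximal ℓ-ideals
containing `h i`), any family compatible on the intersections can be patched. -/
theorem main_theorem_existence {G : Type*} [Lattice G] [AddCommGroup G]
    [CovariantClass G G (· + ·) (· ≤ ·)] (u : G) (hu : IsStrongUnit u)
    (hss : IsStronglySemisimple G) {n : ℕ} (h g : Fin n → G)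
    (hcomp : ∀ i j, ∀ m : AddSubgroup G, IsMaximalLIdeal m →
      h i ∈ m → h j ∈ m → g i - g j ∈ m) :
    ∃ g' : G, ∀ i, ∀ m : AddSubgroup G, IsMaximalLIdeal m → h i ∈ m → g' - g i ∈ m :=
  main_theorem_existence_general hss h g hcomp
end

section
/- Let (G, u) be a unital ℓ-group and let g, h ∈ G be such that 0 < g and n • g ≤ h for every n ∈ ℕ with n ≥ 1. Then g belongs to every maximal ℓ-ideal of G, i.e. g ∈ Rad(G). -/
/-!
If `m` is a maximal ℓ-ideal and `g ∉ m`, the ℓ-ideal generated by `m` and `g` is all of `G`, so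
every element is bounded by some `a + n • |g|` with `a ∈ m`. Applied to an `h` above all multiples
of `|g|`, this gives `(n + 1) • |g| ≤ h ≤ a + n • |g|`; hence `|g| ≤ a`, and `g ∈ m` after all.
-/

section LIdeal

variable {G : Type*} [Lattice G] [AddCommGroup G] [CovariantClass G G (· + ·) (· ≤ ·)]

theorem IsLIdeal.abs_mem {I : AddSubgroup G} (hI : IsLIdeal I) {x : G} (hx : x ∈ I) : |x| ∈ I :=
  hI hx (abs_abs x).le

theorem IsLIdeal.mem_of_abs_le {I : AddSubgroup G} (hI : IsLIdeal I) {a x : G} (ha : a ∈ I)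
    (hxa : |x| ≤ a) : x ∈ I :=
  hI ha (hxa.trans (le_abs_self a))

/-- The ℓ-ideal of the elements dominated in absolute value by a member of the submonoid `P`.
The bound is `p`, not `|p|`, so members of `P` need not themselves belong to it. -/
def dominatedLIdeal (P : AddSubmonoid G) : AddSubgroup G where
  carrier := {x | ∃ p ∈ P, |x| ≤ p}
  zero_mem' := ⟨0, P.zero_mem, abs_zero.le⟩
  add_mem' := by
    rintro x y ⟨p, hp, hxp⟩ ⟨q, hq, hyq⟩
    exact ⟨p + q, P.add_mem hp hq, (abs_add_le x y).trans (add_le_add hxp hyq)⟩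
  neg_mem' := by
    rintro x ⟨p, hp, hxp⟩
    exact ⟨p, hp, (abs_neg x).trans_le hxp⟩

theorem mem_dominatedLIdeal {P : AddSubmonoid G} {x : G} :
    x ∈ dominatedLIdeal P ↔ ∃ p ∈ P, |x| ≤ p :=
  Iff.rfl

theorem isLIdeal_dominatedLIdeal (P : AddSubmonoid G) : IsLIdeal (dominatedLIdeal P) := by
  rintro x y ⟨p, hp, hyp⟩ hxy
  exact ⟨p, hp, hxy.trans hyp⟩

theorem mem_dominatedLIdeal_of_abs_mem {P : AddSubmonoid G} {x : G} (hx : |x| ∈ P) :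
    x ∈ dominatedLIdeal P :=
  ⟨|x|, hx, le_rfl⟩

theorem IsLIdeal.le_dominatedLIdeal {I : AddSubgroup G} (hI : IsLIdeal I) {P : AddSubmonoid G}
    (hIP : I.toAddSubmonoid ≤ P) : I ≤ dominatedLIdeal P :=
  fun _ hx => mem_dominatedLIdeal_of_abs_mem (hIP (hI.abs_mem hx))

theorem IsMaximalLIdeal.eq_top_of_le_of_notMem {m I : AddSubgroup G} (hm : IsMaximalLIdeal m)
    (hI : IsLIdeal I) (hmI : m ≤ I) {g : G} (hgI : g ∈ I) (hgm : g ∉ m) : I = ⊤ := by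
  obtain ⟨-, -, hmax⟩ := hm
  by_contra hI_top
  exact hgm (hmax I hI hI_top hmI ▸ hgI)

theorem IsMaximalLIdeal.exists_abs_le_add_nsmul_abs {m : AddSubgroup G} (hm : IsMaximalLIdeal m)
    {g : G} (hgm : g ∉ m) (x : G) : ∃ a ∈ m, ∃ n : ℕ, |x| ≤ a + n • |g| := by
  let P := m.toAddSubmonoid ⊔ AddSubmonoid.multiples |g|
  have hmP : m ≤ dominatedLIdeal P := hm.1.le_dominatedLIdeal le_sup_left
  have hgP : g ∈ dominatedLIdeal P :=
    mem_dominatedLIdeal_of_abs_mem (AddSubmonoid.mem_sup_right (AddSubmonoid.mem_multiples |g|))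
  have hP_top : dominatedLIdeal P = ⊤ :=
    hm.eq_top_of_le_of_notMem (isLIdeal_dominatedLIdeal P) hmP hgP hgm
  obtain ⟨p, hp, hxp⟩ := mem_dominatedLIdeal.1 (hP_top ▸ AddSubgroup.mem_top x)
  obtain ⟨a, ha, _, ⟨n, rfl⟩, rfl⟩ := AddSubmonoid.mem_sup.1 hp
  exact ⟨a, ha, n, hxp⟩

theorem infinitesimal_mem_radical_general (g h : G) (hgh : ∀ n : ℕ, 1 ≤ n → n • |g| ≤ h) :
    ∀ m : AddSubgroup G, IsMaximalLIdeal m → g ∈ m := by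
  intro m hm
  by_contra hgm
  obtain ⟨a, ha, n, hn⟩ := hm.exists_abs_le_add_nsmul_abs hgm h
  have hle : |g| + n • |g| ≤ a + n • |g| :=
    calc |g| + n • |g| = (n + 1) • |g| := (succ_nsmul' |g| n).symm
      _ ≤ h := hgh (n + 1) (Nat.le_add_left 1 n)
      _ ≤ |h| := le_abs_self h
      _ ≤ a + n • |g| := hn
  exact hgm (hm.1.mem_of_abs_le ha (le_of_add_le_add_right hle))

end LIdeal

/-- An infinitesimal element (one with `n • g ≤ h` for all `n ≥ 1`) of a unital
ℓ-group belongs to every maximal ℓ-ideal, i.e. to the radical. -/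
theorem infinitesimal_mem_radical {G : Type*} [Lattice G] [AddCommGroup G]
    [CovariantClass G G (· + ·) (· ≤ ·)] (u : G) (hu : IsStrongUnit u)
    (g h : G) (hg : 0 < g) (hgh : ∀ n : ℕ, 1 ≤ n → n • g ≤ h) :
    ∀ m : AddSubgroup G, IsMaximalLIdeal m → g ∈ m := by
  refine infinitesimal_mem_radical_general g h ?_
  rwa [abs_of_nonneg hg.le]
end
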